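/- Let f be a standard solution family and set α = e^{iπ/10}. Then for every λ ∈ ℂ with Im λ > 0 one has f(0, −α²·λ) ≠ 0 and |f(0, −α^{−2}·λ)| < |f(0, −α²·λ)|. (Equivalently, the function h(λ) = ψ₊(0,λ)/ψ₋(0,λ) satisfies |h(λ)| < 1 on the open upper half-plane.) -/

import Mathlib

open Complex

/-- `f : ℂ × ℂ → ℂ` is a standard solution family for `f'' = (z³ + λ) f`:
for each `λ` the map `z ↦ f(z,λ)` is entire and solves the ODE, and it has the
Liouville–Green asymptotics `f(z,λ) = z^{-3/4} e^{-(2/5) z^{5/2}} (1 + O(z^{-1/2}))`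
as `z → ∞` in the sector `|arg z| ≤ 3π/5 - ε`, uniformly for `λ` in compact sets. -/
def IsStdSolutionFamily (f : ℂ → ℂ → ℂ) : Prop :=
  (∀ lam : ℂ, Differentiable ℂ (fun z => f z lam) ∧
    ∀ z : ℂ, deriv (deriv (fun w => f w lam)) z = (z ^ 3 + lam) * f z lam) ∧
  (∀ ε > (0 : ℝ), ∀ L : Set ℂ, IsCompact L →
    ∃ C > (0 : ℝ), ∃ R > (0 : ℝ), ∀ lam ∈ L, ∀ z : ℂ,
      R ≤ ‖z‖ → |Complex.arg z| ≤ 3 * Real.pi / 5 - ε →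
      ‖f z lam * z ^ ((3 : ℂ) / 4) *
          Complex.exp ((2 / 5 : ℂ) * z ^ ((5 : ℂ) / 2)) - 1‖
        ≤ C * ‖z‖ ^ (-(1 / 2) : ℝ))


/-- product inequality -/
lemma prod_aux (c : ℝ) (hc : 0 ≤ c) (s : Multiset ℝ) (hs : ∀ t ∈ s, 0 ≤ t ∧ t ≤ 1) :
    1 ≤ (s.map (fun t => 1 + c * t)).prod ∧ 0 ≤ (s.map (fun t => 1 - t)).prod ∧
    (s.map (fun t => 1 - t)).prod ≤ 1 ∧
    1 + c ≤ (s.map (fun t => 1 + c * t)).prod + c * (s.map (fun t => 1 - t)).prod := by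
  induction s using Multiset.induction_on with
  | empty => simp
  | cons a s ih =>
    obtain ⟨h1, h2, h3, h4⟩ := ih (fun t ht => hs t (Multiset.mem_cons_of_mem ht))
    obtain ⟨ha, ha'⟩ := hs a (Multiset.mem_cons_self a s)
    simp only [Multiset.map_cons, Multiset.prod_cons]
    set A := (s.map (fun t => 1 + c * t)).prod
    set B := (s.map (fun t => 1 - t)).prod
    have hca : 0 ≤ c * a := mul_nonneg hc ha
    refine ⟨?_, ?_, ?_, ?_⟩
    · nlinarith
    · exact mul_nonneg (by linarith) h2
    · nlinarith
    · nlinarith [mul_nonneg hca (by linarith : (0:ℝ) ≤ A - B)]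

lemma prod_main (s : Multiset ℝ) (hs : ∀ e ∈ s, 0 < e) (μ ν : ℂ) (r : ℝ) (hr : 0 < r)
    (hμ : ‖μ‖ = r) (hν : ‖ν‖ = r) (hΔ : μ.re ≤ ν.re) :
    (s.map (fun e : ℝ => ‖μ + e‖)).prod ^ 2 *
      (r * (s.map (fun e : ℝ => ‖(r:ℂ) + e‖)).prod ^ 2 +
        2 * (ν.re - μ.re) * (s.map (fun e : ℝ => ‖(0:ℂ) + e‖)).prod *
         ((s.map (fun e : ℝ => ‖(r:ℂ) + e‖)).prod - (s.map (fun e : ℝ => ‖(0:ℂ) + e‖)).prod)) ≤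
    (s.map (fun e : ℝ => ‖ν + e‖)).prod ^ 2 *
      (r * (s.map (fun e : ℝ => ‖(r:ℂ) + e‖)).prod ^ 2) := by
  have e1 : (s.map (fun e : ℝ => ‖(r:ℂ) + e‖)) = s.map (fun e => r + e) := by
    apply Multiset.map_congr rfl
    intro e he
    have := hs e he
    rw [← Complex.ofReal_add, Complex.norm_real, Real.norm_of_nonneg (by linarith)]
  have e2 : (s.map (fun e : ℝ => ‖(0:ℂ) + e‖)) = s.map (fun e => e) := by
    apply Multiset.map_congr rfl
    intro e he
    have := hs e he
    rw [zero_add, Complex.norm_real, Real.norm_of_nonneg (by linarith)]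
  have e3 : ∀ κ : ℂ, (s.map (fun e : ℝ => ‖κ + e‖)).prod ^ 2 =
      (s.map (fun e : ℝ => ‖κ + e‖ ^ 2)).prod := fun κ => Multiset.prod_map_pow.symm
  rw [e1, e2, e3 μ, e3 ν]
  set p := (s.map (fun e => r + e)).prod with hp
  set z := (s.map (fun e => e)).prod with hz
  set M := (s.map (fun e : ℝ => ‖μ + e‖ ^ 2)).prod with hM
  set N := (s.map (fun e : ℝ => ‖ν + e‖ ^ 2)).prod with hN
  set Δ := ν.re - μ.re with hD
  have hΔ0 : 0 ≤ Δ := by linarith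
  have zpos : 0 < z := by
    rw [hz]; apply Multiset.prod_pos; simpa using hs
  have ppos : 0 < p := by
    rw [hp]; apply Multiset.prod_pos; intro a ha
    obtain ⟨e, he, rfl⟩ := Multiset.mem_map.1 ha
    have := hs e he; linarith
  have hM0 : 0 ≤ M := by
    rw [hM]; apply Multiset.prod_nonneg; intro a ha
    obtain ⟨e, he, rfl⟩ := Multiset.mem_map.1 ha
    positivity
  -- each E satisfies (E + r) z ≤ p E
  have key : ∀ e ∈ s, (e + r) * z ≤ p * e := by
    intro e he
    obtain ⟨t, rfl⟩ := Multiset.exists_cons_of_mem he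
    have he0 := hs e he
    rw [hp, hz, Multiset.map_cons, Multiset.map_cons, Multiset.prod_cons, Multiset.prod_cons]
    have : (t.map (fun e => e)).prod ≤ (t.map (fun e => r + e)).prod := by
      apply Multiset.prod_map_le_prod_map₀
      · intro i hi; exact (hs i (Multiset.mem_cons_of_mem hi)).le
      · intro i hi; linarith
    nlinarith [mul_nonneg (mul_nonneg (by linarith : 0 ≤ e + r) he0.le) (sub_nonneg.2 this)]
  set c := 2 * Δ * z / (p * r) with hc
  have hc0 : 0 ≤ c := by positivity
  have step : ∀ e ∈ s, ‖μ + e‖ ^ 2 * (1 + c * (r / (e + r))) ≤ ‖ν + e‖ ^ 2 := by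
    intro e he
    have he0 := hs e he
    have hk := key e he
    have n1 : ‖μ + e‖ ^ 2 = r ^ 2 + 2 * μ.re * e + e ^ 2 := by
      rw [← hμ, ← Complex.normSq_eq_norm_sq, ← Complex.normSq_eq_norm_sq, Complex.normSq_apply, Complex.normSq_apply]
      simp; ring
    have n2 : ‖ν + e‖ ^ 2 = r ^ 2 + 2 * ν.re * e + e ^ 2 := by
      rw [← hν, ← Complex.normSq_eq_norm_sq, ← Complex.normSq_eq_norm_sq, Complex.normSq_apply, Complex.normSq_apply]
      simp; ring
    have hle : ‖μ + e‖ ^ 2 ≤ (e + r) ^ 2 := by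
      rw [n1]
      have := Complex.re_le_norm μ
      rw [hμ] at this
      nlinarith
    have hN2 : ‖ν + e‖ ^ 2 = ‖μ + e‖ ^ 2 + 2 * e * Δ := by rw [n1, n2, hD]; ring
    rw [hN2]
    have hcr : c * (r / (e + r)) = 2 * Δ * z / (p * (e + r)) := by
      rw [hc]; field_simp
    rw [hcr]
    have : ‖μ + e‖ ^ 2 * (2 * Δ * z / (p * (e + r))) ≤ 2 * e * Δ := by
      calc ‖μ + e‖ ^ 2 * (2 * Δ * z / (p * (e + r))) ≤ (e + r) ^ 2 * (2 * Δ * z / (p * (e + r))) := by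
            apply mul_le_mul_of_nonneg_right hle; positivity
        _ = 2 * Δ * (((e + r) * z) / p) := by field_simp
        _ ≤ 2 * Δ * e := by
            apply mul_le_mul_of_nonneg_left _ (by positivity)
            rw [div_le_iff₀ ppos]; linarith
        _ = 2 * e * Δ := by ring
    linarith
  have big : M * (s.map (fun e => 1 + c * (r / (e + r)))).prod ≤ N := by
    rw [hM, hN, ← Multiset.prod_map_mul]
    apply Multiset.prod_map_le_prod_map₀
    · intro i hi; have := hs i hi; positivity
    · exact step
  obtain ⟨-, -, -, h4⟩ := prod_aux c hc0 (s.map (fun e => r / (e + r))) (by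
    intro t ht
    obtain ⟨e, he, rfl⟩ := Multiset.mem_map.1 ht
    have := hs e he
    refine ⟨by positivity, ?_⟩
    rw [div_le_one (by positivity)]; linarith)
  rw [Multiset.map_map, Multiset.map_map] at h4
  simp only [Function.comp_def] at h4
  have hq : (s.map (fun e => 1 - r / (e + r))).prod = z / p := by
    rw [hz, hp, ← Multiset.prod_map_div]
    congr 1
    apply Multiset.map_congr rfl
    intro e he
    have := hs e he
    field_simp
    ring
  rw [hq] at h4
  have h5 : M * (1 + c - c * (z / p)) ≤ N :=
    le_trans (mul_le_mul_of_nonneg_left (by linarith) hM0) big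
  have h6 := mul_le_mul_of_nonneg_right h5 (by positivity : 0 ≤ r * p ^ 2)
  refine le_trans (le_of_eq ?_) h6
  rw [hc]
  field_simp
  ring

/-- symplectic Euler scheme -/
def eul {R : Type*} [CommRing R] (h : R) (lam : R) : ℕ → R × R
  | 0 => (0, 1)
  | k + 1 => ((eul h lam k).1 + h * ((eul h lam k).2 + h * ((h * k) ^ 3 + lam) * (eul h lam k).1),
      (eul h lam k).2 + h * ((h * k) ^ 3 + lam) * (eul h lam k).1)

lemma eul_snd {R : Type*} [CommRing R] (h lam : R) (k : ℕ) : (eul h lam (k+1)).2 =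
    (eul h lam k).2 + h * ((h * k) ^ 3 + lam) * (eul h lam k).1 := rfl

lemma eul_fst {R : Type*} [CommRing R] (h lam : R) (k : ℕ) : (eul h lam (k+1)).1 =
    (eul h lam k).1 + h * (eul h lam (k+1)).2 := rfl

lemma eul_map {R S : Type*} [CommRing R] [CommRing S] (F : R →+* S) (h lam : R) (k : ℕ) :
    F (eul h lam k).1 = (eul (F h) (F lam) k).1 ∧ F (eul h lam k).2 = (eul (F h) (F lam) k).2 := by
  induction k with
  | zero => simp [eul]
  | succ k ih => simp [eul, ih.1, ih.2]

lemma eul_real_pos (h lam : ℝ) (hh : 0 < h) (hl : 0 ≤ lam) (k : ℕ) :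
    h * k ≤ (eul h lam k).1 ∧ 1 ≤ (eul h lam k).2 := by
  induction k with
  | zero => simp [eul]
  | succ k ih =>
    have h0 : 0 ≤ (eul h lam k).1 := le_trans (by positivity) ih.1
    have h2 : 1 ≤ (eul h lam (k+1)).2 := by
      rw [eul_snd]
      have : 0 ≤ h * ((h * k) ^ 3 + lam) * (eul h lam k).1 := by positivity
      linarith [ih.2]
    refine ⟨?_, h2⟩
    rw [eul_fst]; push_cast
    nlinarith [ih.1]

lemma eul_real_mono (h lam : ℝ) (hh : 0 < h) (hl : 0 ≤ lam) (k : ℕ) :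
    (eul h 0 k).1 ≤ (eul h lam k).1 ∧ (eul h 0 k).2 ≤ (eul h lam k).2 := by
  induction k with
  | zero => simp [eul]
  | succ k ih =>
    have h0 : 0 ≤ (eul h lam k).1 := le_trans (by positivity) (eul_real_pos h lam hh hl k).1
    have h00 : 0 ≤ (eul h 0 k).1 := le_trans (by positivity) (eul_real_pos h 0 hh le_rfl k).1
    have h2 : (eul h 0 (k+1)).2 ≤ (eul h lam (k+1)).2 := by
      rw [eul_snd, eul_snd]
      have : h * ((h * k) ^ 3 + 0) * (eul h 0 k).1 ≤ h * ((h * k) ^ 3 + lam) * (eul h lam k).1 := by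
        gcongr
        exact ih.1
      linarith [ih.2]
    refine ⟨?_, h2⟩
    rw [eul_fst, eul_fst]
    nlinarith [ih.1]

lemma eul_real_cast (h lam : ℝ) (k : ℕ) : (eul (h:ℂ) (lam:ℂ) k).1 = ((eul h lam k).1 : ℝ) :=
  ((eul_map Complex.ofRealHom h lam k).1).symm

lemma eul_im (h : ℝ) (hh : 0 < h) (lam : ℂ) (hl : lam.im ≠ 0) (k : ℕ) :
    0 < ((eul (h:ℂ) lam (k+2)).2 * (starRingEnd ℂ) (eul (h:ℂ) lam (k+2)).1).im / lam.im := by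
  have step : ∀ n, ((eul (h:ℂ) lam (n+1)).2 * (starRingEnd ℂ) (eul (h:ℂ) lam (n+1)).1).im / lam.im
      = ((eul (h:ℂ) lam n).2 * (starRingEnd ℂ) (eul (h:ℂ) lam n).1).im / lam.im
        + h * Complex.normSq (eul (h:ℂ) lam n).1 := by
    intro n
    have e1 : (eul (h:ℂ) lam (n+1)).2 * (starRingEnd ℂ) (eul (h:ℂ) lam (n+1)).1 =
        (eul (h:ℂ) lam n).2 * (starRingEnd ℂ) (eul (h:ℂ) lam n).1
        + ((h * (h * n) ^ 3 * Complex.normSq (eul (h:ℂ) lam n).1 : ℝ) : ℂ)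
        + ((h * Complex.normSq (eul (h:ℂ) lam n).1 : ℝ) : ℂ) * lam
        + ((h * Complex.normSq (eul (h:ℂ) lam (n+1)).2 : ℝ) : ℂ) := by
      rw [eul_fst]
      push_cast
      simp only [← Complex.mul_conj, map_add, map_mul, Complex.conj_ofReal]
      rw [eul_snd]
      ring
    rw [e1]
    simp only [Complex.add_im, Complex.ofReal_im, Complex.im_ofReal_mul]
    field_simp
    ring
  induction k with
  | zero =>
    rw [step, step]
    have : 0 < h * Complex.normSq (eul (h:ℂ) lam 1).1 := by
      apply mul_pos hh
      simp [eul, hh.ne']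
    simpa [eul] using this
  | succ k ih =>
    rw [step]
    have := Complex.normSq_nonneg (eul (h:ℂ) lam (k+2)).1
    positivity

lemma eul_ne_zero (h : ℝ) (hh : 0 < h) (lam : ℂ) (hl : lam.im ≠ 0 ∨ 0 ≤ lam.re) (k : ℕ) :
    (eul (h:ℂ) lam (k+2)).1 ≠ 0 := by
  by_cases h0 : lam.im = 0
  · have hre : 0 ≤ lam.re := by tauto
    have : lam = (lam.re : ℂ) := by apply Complex.ext <;> simp [h0]
    rw [this, eul_real_cast]
    have := (eul_real_pos h lam.re hh hre (k+2)).1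
    have h3 : 0 < h * ((k+2:ℕ):ℝ) := by positivity
    exact_mod_cast (by linarith : 0 < (eul h lam.re (k+2)).1).ne'
  · intro hz
    have := eul_im h hh lam h0 k
    rw [hz] at this
    simp at this

open Polynomial in
lemma eul_prod (h : ℝ) (hh : 0 < h) (k : ℕ) : ∃ c : ℝ, 0 ≤ c ∧ ∃ s : Multiset ℝ, (∀ e ∈ s, 0 < e) ∧
    ∀ lam : ℂ, ‖(eul (h:ℂ) lam (k+2)).1‖ = c * (s.map (fun e : ℝ => ‖lam + e‖)).prod := by
  set P : ℂ[X] := (eul (C (h:ℂ)) X (k+2)).1 with hP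
  have hev : ∀ lam : ℂ, P.eval lam = (eul (h:ℂ) lam (k+2)).1 := by
    intro lam
    have := (eul_map (Polynomial.evalRingHom lam) (C (h:ℂ)) X (k+2)).1
    simpa using this
  have hroot : ∀ z ∈ P.roots, z.im = 0 ∧ z.re < 0 := by
    intro z hz
    have h1 : P.eval z = 0 := (Polynomial.mem_roots'.1 hz).2
    rw [hev] at h1
    by_contra hcon
    exact eul_ne_zero h hh z (by
      by_cases h0 : z.im = 0
      · right; by_contra h2; exact hcon ⟨h0, by linarith⟩
      · left; exact h0) k h1
  refine ⟨‖P.leadingCoeff‖, norm_nonneg _, P.roots.map (fun z => -z.re), ?_, ?_⟩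
  · intro e he
    obtain ⟨z, hz, rfl⟩ := Multiset.mem_map.1 he
    have := (hroot z hz).2
    linarith
  · intro lam
    rw [← hev, (IsAlgClosed.splits P).eval_eq_prod_roots, norm_mul]
    congr 1
    have hnp : ∀ t : Multiset ℂ, ‖t.prod‖ = (t.map (fun z => ‖z‖)).prod :=
      fun t => map_multiset_prod (normHom : ℂ →*₀ ℝ) t
    rw [hnp, Multiset.map_map, Multiset.map_map]
    congr 1
    apply Multiset.map_congr rfl
    intro z hz
    have := (hroot z hz).1
    have h2 : z = (z.re : ℂ) := by apply Complex.ext <;> simp [this]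
    simp only [Function.comp_def]
    rw [h2]
    simp [sub_eq_add_neg]

open Filter Topology

/-- first function solves the equation on the real line, the second is its derivative -/
def Sol (lam : ℂ) (y y' : ℝ → ℂ) : Prop :=
  ∀ x : ℝ, HasDerivAt y (y' x) x ∧ HasDerivAt y' (((x:ℂ) ^ 3 + lam) * y x) x

lemma bound_on {g : ℝ → ℂ} (hg : Continuous g) (X : ℝ) :
    ∃ C : ℝ, 0 ≤ C ∧ ∀ x ∈ Set.Icc 0 X, ‖g x‖ ≤ C := by
  obtain ⟨C, hC⟩ := (isCompact_Icc (a := (0:ℝ)) (b := X)).exists_bound_of_continuousOn hg.continuousOn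
  exact ⟨max C 0, le_max_right _ _, fun x hx => (hC x hx).trans (le_max_left _ _)⟩

/-- mean value: second-order remainder with base derivative taken anywhere in the interval -/
lemma second_order {g g' g'' : ℝ → ℂ} (h1 : ∀ x, HasDerivAt g (g' x) x)
    (h2 : ∀ x, HasDerivAt g' (g'' x) x) {X C : ℝ} (hC : ∀ x ∈ Set.Icc 0 X, ‖g'' x‖ ≤ C)
    {a b m : ℝ} (ha : 0 ≤ a) (hab : a ≤ b) (hb : b ≤ X) (hm : m ∈ Set.Icc a b) :
    ‖g b - g a - (b - a : ℝ) * g' m‖ ≤ C * (b - a) ^ 2 := by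
  have hC0 : 0 ≤ C := (norm_nonneg _).trans (hC a ⟨ha, hab.trans hb⟩)
  have hder : ∀ x ∈ Set.Icc a b, ‖g' x - g' m‖ ≤ C * (b - a) := by
    intro x hx
    have := (convex_Icc a b).norm_image_sub_le_of_norm_hasDerivWithin_le
      (f := g') (f' := g'') (C := C) (fun x _ => (h2 x).hasDerivWithinAt)
      (fun x hx => hC x ⟨ha.trans hx.1, hx.2.trans hb⟩) hm hx
    refine this.trans (mul_le_mul_of_nonneg_left ?_ hC0)
    rw [Real.norm_eq_abs, abs_le]
    constructor <;> linarith [hx.1, hx.2, hm.1, hm.2]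
  have := (convex_Icc a b).norm_image_sub_le_of_norm_hasDerivWithin_le
      (f := fun x => g x - (x:ℂ) * g' m) (f' := fun x => g' x - g' m) (C := C * (b - a))
      (x := a) (y := b) (fun x _ => by
        have := ((h1 x).sub ((Complex.ofRealCLM.hasDerivAt (x := x)).mul_const (g' m)))
        have h3 := this.hasDerivWithinAt (s := Set.Icc a b)
        simp only [Complex.ofRealCLM_apply, Complex.ofReal_one, one_mul] at h3
        exact h3)
      hder (Set.left_mem_Icc.2 hab) (Set.right_mem_Icc.2 hab)
  rw [Real.norm_of_nonneg (by linarith)] at this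
  calc ‖g b - g a - (b - a : ℝ) * g' m‖ = ‖g b - (b:ℂ) * g' m - (g a - (a:ℂ) * g' m)‖ := by
        congr 1; push_cast; ring
    _ ≤ _ := this
    _ = _ := by ring

lemma euler_tendsto {lam : ℂ} {y y' : ℝ → ℂ} (hs : Sol lam y y') (h0 : y 0 = 0) (h0' : y' 0 = 1)
    {X : ℝ} (hX : 0 < X) :
    Tendsto (fun n : ℕ => (eul ((X / (n+2:ℕ) : ℝ) : ℂ) lam (n+2)).1) atTop (𝓝 (y X)) := by
  have cy : Continuous y := continuous_iff_continuousAt.2 fun x => (hs x).1.continuousAt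
  have cy' : Continuous y' := continuous_iff_continuousAt.2 fun x => (hs x).2.continuousAt
  have hder3 : ∀ x : ℝ, HasDerivAt (fun x : ℝ => ((x:ℂ) ^ 3 + lam) * y x)
      (3 * (x:ℂ) ^ 2 * y x + ((x:ℂ) ^ 3 + lam) * y' x) x := by
    intro x
    have h1 : HasDerivAt (fun x : ℝ => (x:ℂ) ^ 3 + lam) (3 * (x:ℂ) ^ 2) x := by
      have := ((Complex.ofRealCLM.hasDerivAt (x := x)).pow 3).add_const lam
      simpa using this
    exact h1.mul (hs x).1
  obtain ⟨C1, hC10, hC1⟩ := bound_on (g := fun x : ℝ => ((x:ℂ) ^ 3 + lam) * y x) (by fun_prop) X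
  obtain ⟨C2, hC20, hC2⟩ := bound_on
    (g := fun x : ℝ => (3 * (x:ℂ) ^ 2 * y x + ((x:ℂ) ^ 3 + lam) * y' x)) (by fun_prop) X
  obtain ⟨K, hK0, hK⟩ := bound_on (g := fun x : ℝ => ((x:ℂ) ^ 3 + lam)) (by fun_prop) X
  -- one-run error estimate
  have run : ∀ h : ℝ, 0 < h → h ≤ X → ∀ k : ℕ, h * k ≤ X →
      ‖y (h * k) - (eul (h:ℂ) lam k).1‖ + ‖y' (h * k) - (eul (h:ℂ) lam k).2‖ ≤
        (h * k) * (h * (C1 + C2 * (1 + X))) * Real.exp ((h * k) * (K * (1 + X) + 1)) := by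
    intro h hh hhX k
    induction k with
    | zero => intro _; simp [eul, h0, h0']
    | succ k ih =>
      intro hk
      have hk' : h * (k:ℝ) + h ≤ X := by push_cast at hk; linarith
      have hk0 : 0 ≤ h * (k:ℝ) := by positivity
      have ih := ih (by linarith)
      have hxe : h * ((k+1:ℕ):ℝ) = h * k + h := by push_cast; ring
      rw [hxe]
      set x := h * (k:ℝ) with hx
      set u := (eul (h:ℂ) lam k).1
      set v := (eul (h:ℂ) lam k).2
      have r2 := second_order (fun x => (hs x).2) hder3 hC2 (a := x) (b := x + h) (m := x) hk0
        (by linarith) hk' ⟨le_rfl, by linarith⟩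
      have r1 := second_order (fun x => (hs x).1) (fun x => (hs x).2) hC1 (a := x) (b := x + h)
        (m := x + h) hk0 (by linarith) hk' ⟨by linarith, le_rfl⟩
      rw [add_sub_cancel_left] at r1 r2
      have hKx := hK x ⟨hk0, by linarith⟩
      have dv : ‖y' (x + h) - (eul (h:ℂ) lam (k+1)).2‖ ≤ ‖y' x - v‖ + h * K * ‖y x - u‖ + C2 * h ^ 2 := by
        have : y' (x + h) - (eul (h:ℂ) lam (k+1)).2 = (y' x - v) + (h:ℂ) * ((x:ℂ)^3 + lam) * (y x - u)
            + (y' (x + h) - y' x - (h:ℝ) * (((x:ℂ) ^ 3 + lam) * y x)) := by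
          rw [eul_snd, hx]; push_cast; ring
        rw [this]
        refine (norm_add₃_le).trans ?_
        gcongr
        rw [norm_mul, norm_mul, Complex.norm_real, Real.norm_of_nonneg hh.le]
        gcongr
      have du : ‖y (x + h) - (eul (h:ℂ) lam (k+1)).1‖ ≤ ‖y x - u‖
          + h * ‖y' (x + h) - (eul (h:ℂ) lam (k+1)).2‖ + C1 * h ^ 2 := by
        have : y (x + h) - (eul (h:ℂ) lam (k+1)).1 = (y x - u)
            + (h:ℂ) * (y' (x + h) - (eul (h:ℂ) lam (k+1)).2)
            + (y (x + h) - y x - (h:ℝ) * y' (x + h)) := by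
          rw [eul_fst]; ring
        rw [this]
        refine (norm_add₃_le).trans ?_
        gcongr
        rw [norm_mul, Complex.norm_real, Real.norm_of_nonneg hh.le]
      set e := ‖y x - u‖
      set d := ‖y' x - v‖
      have he : 0 ≤ e := norm_nonneg _
      have hd : 0 ≤ d := norm_nonneg _
      set S := C1 + C2 * (1 + X) with hS
      have hS0 : 0 ≤ S := by positivity
      set Q := K * (1 + X) + 1 with hQ
      have hQ0 : 0 ≤ Q := by positivity
      have comb : ‖y (x + h) - (eul (h:ℂ) lam (k+1)).1‖ + ‖y' (x + h) - (eul (h:ℂ) lam (k+1)).2‖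
          ≤ (1 + h * Q) * (e + d) + h ^ 2 * S := by
        have t1 : h * ‖y' (x + h) - (eul (h:ℂ) lam (k+1)).2‖ ≤ h * (d + h * K * e + C2 * h ^ 2) := by
          gcongr
        have t2 : h * (h * K * e) ≤ h * (X * K * e) := by gcongr
        have t3 : h * (C2 * h ^ 2) ≤ X * (C2 * h ^ 2) := by gcongr
        have t4 : 0 ≤ h * K * (1 + X) * d := by positivity
        have t5 : 0 ≤ h * e := by positivity
        rw [hQ, hS]
        nlinarith
      refine comb.trans ?_
      have e1 : 1 + h * Q ≤ Real.exp (h * Q) := by linarith [Real.add_one_le_exp (h * Q)]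
      have e2 : Real.exp ((x + h) * Q) = Real.exp (x * Q) * Real.exp (h * Q) := by
        rw [← Real.exp_add]; ring_nf
      have e3 : 1 ≤ Real.exp ((x + h) * Q) := Real.one_le_exp (by positivity)
      calc (1 + h * Q) * (e + d) + h ^ 2 * S
          ≤ Real.exp (h * Q) * (x * (h * S) * Real.exp (x * Q)) + h ^ 2 * S * Real.exp ((x + h) * Q) := by
            have e4 : h ^ 2 * S ≤ h ^ 2 * S * Real.exp ((x + h) * Q) :=
              le_mul_of_one_le_right (by positivity) e3
            refine add_le_add ?_ e4
            gcongr
        _ = (x + h) * (h * S) * Real.exp ((x + h) * Q) := by rw [e2]; ring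
  -- pass to the limit
  rw [tendsto_iff_norm_sub_tendsto_zero]
  set A := X * (C1 + C2 * (1 + X)) * Real.exp (X * (K * (1 + X) + 1)) with hA
  have lim : Tendsto (fun n : ℕ => (X / (n+2:ℕ) : ℝ) * A) atTop (𝓝 0) := by
    have h1 : Tendsto (fun n : ℕ => (X / (n:ℝ))) atTop (𝓝 0) := tendsto_const_div_atTop_nhds_zero_nat X
    have h2 := (h1.comp (tendsto_add_atTop_nat 2)).mul_const A
    simpa using h2
  refine squeeze_zero (fun _ => norm_nonneg _) (fun n => ?_) lim
  have hn : (0:ℝ) < ((n+2:ℕ):ℝ) := by positivity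
  have hXe : X / ((n+2:ℕ):ℝ) * ((n+2:ℕ):ℝ) = X := by field_simp
  have := run (X / (n+2:ℕ)) (by positivity) (div_le_self hX.le (by push_cast; linarith [n.cast_nonneg (α := ℝ)])) (n+2)
    hXe.le
  rw [hXe] at this
  rw [norm_sub_rev]
  calc _ ≤ _ := le_add_of_nonneg_right (norm_nonneg _)
    _ ≤ _ := this
    _ = _ := by rw [hA]; ring

lemma phi_ineq {μ ν : ℂ} {r : ℝ} (hr : 0 < r) (hμ : ‖μ‖ = r) (hν : ‖ν‖ = r) (hΔ : μ.re ≤ ν.re)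
    {φ : ℂ → ℝ → ℂ} {φ' : ℂ → ℝ → ℂ} (hs : ∀ lam, Sol lam (φ lam) (φ' lam))
    (h0 : ∀ lam, φ lam 0 = 0) (h0' : ∀ lam, φ' lam 0 = 1) {X : ℝ} (hX : 0 < X) :
    ‖φ μ X‖ ^ 2 * (r * ‖φ r X‖ ^ 2 + 2 * (ν.re - μ.re) * ‖φ 0 X‖ * (‖φ r X‖ - ‖φ 0 X‖)) ≤
      ‖φ ν X‖ ^ 2 * (r * ‖φ r X‖ ^ 2) := by
  have T : ∀ lam, Tendsto (fun n : ℕ => ‖(eul ((X / (n+2:ℕ) : ℝ) : ℂ) lam (n+2)).1‖) atTop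
      (𝓝 ‖φ lam X‖) := fun lam => (euler_tendsto (hs lam) (h0 lam) (h0' lam) hX).norm
  refine le_of_tendsto_of_tendsto' (((T μ).pow 2).mul ((((T r).pow 2).const_mul r).add
    (((T 0).const_mul (2 * (ν.re - μ.re))).mul ((T r).sub (T 0)))))
    (((T ν).pow 2).mul (((T r).pow 2).const_mul r)) (fun n => ?_)
  obtain ⟨c, hc, s, hs, hp⟩ := eul_prod (X / (n+2:ℕ)) (by positivity) n
  simp only [hp]
  have := mul_le_mul_of_nonneg_left (prod_main s hs μ ν r hr hμ hν hΔ) (by positivity : 0 ≤ c ^ 4)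
  refine le_trans (le_of_eq ?_) (this.trans (le_of_eq ?_)) <;> ring

/-- for real nonnegative parameters, positivity and comparison -/
lemma phi_pos {lam : ℝ} (hl : 0 ≤ lam) {φ φ' : ℝ → ℂ} (hs : Sol lam φ φ')
    (h0 : φ 0 = 0) (h0' : φ' 0 = 1) {X : ℝ} (hX : 0 < X) : X ≤ (φ X).re ∧ (φ X).im = 0 := by
  have T := euler_tendsto hs h0 h0' hX
  have T1 := (Complex.continuous_re.tendsto _).comp T
  have T2 := (Complex.continuous_im.tendsto _).comp T
  constructor
  · refine ge_of_tendsto' T1 (fun n => ?_)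
    simp only [Function.comp_def]
    rw [eul_real_cast, Complex.ofReal_re]
    have hn : (0:ℝ) < ((n+2:ℕ):ℝ) := by positivity
    have hXe : X / ((n+2:ℕ):ℝ) * ((n+2:ℕ):ℝ) = X := by field_simp
    have := (eul_real_pos (X / (n+2:ℕ)) lam (by positivity) hl (n+2)).1
    linarith
  · refine tendsto_nhds_unique T2 ?_
    simp only [Function.comp_def, eul_real_cast, Complex.ofReal_im]
    exact tendsto_const_nhds

lemma phi_mono {lam : ℝ} (hl : 0 ≤ lam) {φ φ' χ χ' : ℝ → ℂ} (hs : Sol lam φ φ')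
    (h0 : φ 0 = 0) (h0' : φ' 0 = 1) (ht : Sol 0 χ χ')
    (g0 : χ 0 = 0) (g0' : χ' 0 = 1) {X : ℝ} (hX : 0 < X) : (χ X).re ≤ (φ X).re := by
  have T1 := (Complex.continuous_re.tendsto _).comp (euler_tendsto hs h0 h0' hX)
  have T2 := (Complex.continuous_re.tendsto _).comp (euler_tendsto ht g0 g0' hX)
  refine le_of_tendsto_of_tendsto' T2 T1 (fun n => ?_)
  simp only [Function.comp_def]
  rw [eul_real_cast, ← Complex.ofReal_zero, eul_real_cast, Complex.ofReal_re, Complex.ofReal_re]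
  exact (eul_real_mono (X / (n+2:ℕ)) lam (by positivity) hl (n+2)).1

lemma phi_ratio {r : ℝ} (hr : 0 < r) {φ φ' χ χ' : ℝ → ℂ} (hs : Sol r φ φ')
    (h0 : φ 0 = 0) (h0' : φ' 0 = 1) (ht : Sol 0 χ χ')
    (g0 : χ 0 = 0) (g0' : χ' 0 = 1) : ∃ c : ℝ, 1 < c ∧ ∀ X : ℝ, 1 ≤ X → c * ‖χ X‖ ≤ ‖φ X‖ := by
  have ht0 : Sol ((0:ℝ):ℂ) χ χ' := by simpa using ht
  have pa : ∀ x : ℝ, 0 < x → 0 < (φ x).re := fun x hx =>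
    lt_of_lt_of_le hx (phi_pos hr.le hs h0 h0' hx).1
  have pb : ∀ x : ℝ, 0 < x → 0 < (χ x).re := fun x hx =>
    lt_of_lt_of_le hx (phi_pos le_rfl ht0 g0 g0' hx).1
  have da : ∀ x, HasDerivAt (fun x => (φ x).re) (φ' x).re x := fun x =>
    Complex.reCLM.hasFDerivAt.comp_hasDerivAt x (hs x).1
  have db : ∀ x, HasDerivAt (fun x => (χ x).re) (χ' x).re x := fun x =>
    Complex.reCLM.hasFDerivAt.comp_hasDerivAt x (ht x).1
  have da' : ∀ x : ℝ, HasDerivAt (fun x => (φ' x).re) ((x ^ 3 + r) * (φ x).re) x := fun x => by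
    have := Complex.reCLM.hasFDerivAt.comp_hasDerivAt x (hs x).2
    have e : ((x:ℂ) ^ 3 + r) = ((x ^ 3 + r : ℝ) : ℂ) := by push_cast; ring
    rw [e, Complex.reCLM_apply, Complex.re_ofReal_mul] at this
    exact this
  have db' : ∀ x : ℝ, HasDerivAt (fun x => (χ' x).re) (x ^ 3 * (χ x).re) x := fun x => by
    have := Complex.reCLM.hasFDerivAt.comp_hasDerivAt x (ht x).2
    have e : ((x:ℂ) ^ 3 + 0) = ((x ^ 3 : ℝ) : ℂ) := by push_cast; ring
    rw [e, Complex.reCLM_apply, Complex.re_ofReal_mul] at this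
    exact this
  set W : ℝ → ℝ := fun x => (φ' x).re * (χ x).re - (φ x).re * (χ' x).re with hW
  have dW : ∀ x, HasDerivAt W (r * (φ x).re * (χ x).re) x := fun x => by
    have := ((da' x).mul (db x)).sub ((da x).mul (db' x))
    refine this.congr_deriv ?_
    ring
  have Wmono : StrictMonoOn W (Set.Ici 0) := by
    apply strictMonoOn_of_deriv_pos (convex_Ici 0)
    · exact fun x _ => (dW x).continuousAt.continuousWithinAt
    · intro x hx
      rw [interior_Ici] at hx
      rw [(dW x).deriv]
      have := pa x hx; have := pb x hx; positivity
  have Wpos : ∀ x : ℝ, 0 < x → 0 < W x := fun x hx => by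
    have := Wmono (Set.mem_Ici.2 le_rfl) (Set.mem_Ici.2 hx.le) hx
    simpa [hW, h0, g0] using this
  have Rmono : StrictMonoOn (fun x => (φ x).re / (χ x).re) (Set.Ioi 0) := by
    have dR : ∀ x : ℝ, 0 < x → HasDerivAt (fun x => (φ x).re / (χ x).re) (W x / (χ x).re ^ 2) x :=
      fun x hx => (da x).div (db x) (pb x hx).ne'
    apply strictMonoOn_of_deriv_pos (convex_Ioi 0)
    · exact fun x hx => (dR x hx).continuousAt.continuousWithinAt
    · intro x hx
      rw [interior_Ioi] at hx
      rw [(dR x hx).deriv]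
      have := Wpos x hx; have := pb x hx; positivity
  refine ⟨(φ 1).re / (χ 1).re, ?_, ?_⟩
  · have h1 := Rmono (a := 1/2) (b := 1) (by norm_num) (by norm_num) (by norm_num)
    have h2 : 1 ≤ (φ (1/2)).re / (χ (1/2)).re := by
      rw [one_le_div (pb _ (by norm_num))]
      exact phi_mono hr.le hs h0 h0' ht g0 g0' (by norm_num)
    exact lt_of_le_of_lt h2 h1
  · intro X hX
    have hX0 : 0 < X := by linarith
    have h1 := Rmono.monotoneOn (a := 1) (b := X) (by norm_num) hX0 hX
    have n1 : ‖χ X‖ = (χ X).re := by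
      have : χ X = ((χ X).re : ℂ) := by
        apply Complex.ext <;> simp [(phi_pos le_rfl ht0 g0 g0' hX0).2]
      conv_lhs => rw [this]
      rw [Complex.norm_real, Real.norm_of_nonneg (pb X hX0).le]
    have n2 : (φ X).re ≤ ‖φ X‖ := Complex.re_le_norm _
    rw [n1]
    rw [le_div_iff₀ (pb X hX0)] at h1
    linarith

/-- the weight -/
noncomputable def wt (x : ℝ) : ℝ := x ^ (3/4 : ℝ) * Real.exp (2/5 * x ^ (5/2 : ℝ))

lemma wt_atTop : Tendsto wt atTop atTop := by
  apply Tendsto.atTop_mul_atTop₀ (tendsto_rpow_atTop (by norm_num))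
  exact Real.tendsto_exp_atTop.comp
    ((tendsto_rpow_atTop (by norm_num)).const_mul_atTop (by norm_num))

lemma small_of_wt {y : ℝ → ℂ} (hy : Tendsto (fun x => y x * (wt x : ℂ)) atTop (𝓝 1)) :
    Tendsto y atTop (𝓝 0) := by
  have h1 : Tendsto (fun x => ((wt x)⁻¹ : ℝ)) atTop (𝓝 0) := wt_atTop.inv_tendsto_atTop
  have h2 := hy.mul ((Complex.continuous_ofReal.tendsto 0).comp h1)
  simp only [Complex.ofReal_zero, mul_zero] at h2
  refine h2.congr' ?_
  filter_upwards [wt_atTop.eventually_gt_atTop 0] with x hx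
  have : (wt x : ℂ) ≠ 0 := by exact_mod_cast hx.ne'
  simp only [Function.comp_def]
  push_cast
  field_simp

lemma ne_of_wt {y : ℝ → ℂ} (hy : Tendsto (fun x => y x * (wt x : ℂ)) atTop (𝓝 1)) :
    ∀ᶠ x in atTop, y x ≠ 0 := by
  filter_upwards [hy.eventually_ne one_ne_zero] with x hx h
  simp [h] at hx

lemma wronskian_const {lam : ℂ} {y y' g g' : ℝ → ℂ} (hy : Sol lam y y') (hg : Sol lam g g') (x : ℝ) :
    y x * g' x - y' x * g x = y 0 * g' 0 - y' 0 * g 0 := by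
  have d : ∀ x, HasDerivAt (fun x => y x * g' x - y' x * g x) 0 x := fun x => by
    have := ((hy x).1.mul (hg x).2).sub ((hy x).2.mul (hg x).1)
    refine this.congr_deriv ?_
    ring
  exact is_const_of_deriv_eq_zero (fun x => (d x).differentiableAt) (fun x => (d x).deriv) x 0

lemma quot_deriv {lam : ℂ} {y y' g g' : ℝ → ℂ} (hy : Sol lam y y') (hg : Sol lam g g') {x : ℝ}
    (hx : y x ≠ 0) : HasDerivAt (fun x => g x / y x) ((y 0 * g' 0 - y' 0 * g 0) / y x ^ 2) x := by
  have := (hg x).1.div (hy x).1 hx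
  refine this.congr_deriv ?_
  rw [← wronskian_const hy hg x]
  ring

lemma exists_phi {lam : ℂ} {y y' g g' : ℝ → ℂ} (hy : Sol lam y y') (hg : Sol lam g g')
    (hw : Tendsto (fun x => y x * (wt x : ℂ)) atTop (𝓝 1))
    (hng : ¬ Tendsto g atTop (𝓝 0)) :
    ∃ φ φ' : ℝ → ℂ, Sol lam φ φ' ∧ φ 0 = 0 ∧ φ' 0 = 1 := by
  have hW : y 0 * g' 0 - y' 0 * g 0 ≠ 0 := by
    intro hW
    apply hng
    obtain ⟨x0, hx0⟩ := eventually_atTop.1 (ne_of_wt hw)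
    have hc : ∀ x ≥ x0, g x / y x = g x0 / y x0 := by
      intro x hx
      have d : ∀ t ∈ Set.Icc x0 x, HasDerivAt (fun x => g x / y x) 0 t := fun t ht => by
        have := quot_deriv hy hg (hx0 t ht.1)
        rwa [hW, zero_div] at this
      exact constant_of_has_deriv_right_zero (fun t ht => (d t ht).continuousAt.continuousWithinAt)
        (fun t ht => (d t ⟨ht.1, ht.2.le⟩).hasDerivWithinAt) x ⟨hx, le_rfl⟩
    have h1 := (small_of_wt hw).const_mul (g x0 / y x0)
    rw [mul_zero] at h1
    refine h1.congr' ?_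
    filter_upwards [eventually_ge_atTop x0] with x hx
    rw [← hc x hx, div_mul_cancel₀ _ (hx0 x hx)]
  set W := y 0 * g' 0 - y' 0 * g 0 with hWd
  refine ⟨fun x => y 0 / W * g x - g 0 / W * y x, fun x => y 0 / W * g' x - g 0 / W * y' x, ?_, ?_, ?_⟩
  · intro x
    refine ⟨((hg x).1.const_mul _).sub ((hy x).1.const_mul _), ?_⟩
    refine (((hg x).2.const_mul _).sub ((hy x).2.const_mul _)).congr_deriv ?_
    ring
  · ring
  · field_simp
    rw [hWd]; ring

lemma lhopital {u u' : ℝ → ℂ} {E E' : ℝ → ℝ} {c : ℂ}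
    (hu : ∀ᶠ x in atTop, HasDerivAt u (u' x) x) (hE : ∀ᶠ x in atTop, HasDerivAt E (E' x) x)
    (hE' : ∀ᶠ x in atTop, 0 < E' x) (hEt : Tendsto E atTop atTop)
    (hq : Tendsto (fun x => u' x / (E' x : ℂ)) atTop (𝓝 c)) :
    Tendsto (fun x => u x / (E x : ℂ)) atTop (𝓝 c) := by
  rw [Metric.tendsto_atTop'] 
  intro ε hε
  have hq' := (Metric.tendsto_nhds.1 hq) (ε/2) (by positivity)
  obtain ⟨x0, hx0⟩ := eventually_atTop.1 (((hu.and hE).and hE').and hq')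
  set B := ‖u x0 - c * E x0‖ with hB
  have est : ∀ x ≥ x0, ‖u x - c * E x‖ ≤ B + ε/2 * (E x - E x0) := by
    intro x hx
    have dv : ∀ t ∈ Set.Icc x0 x, HasDerivAt (fun x => u x - c * (E x : ℂ)) (u' t - c * (E' t : ℂ)) t :=
      fun t ht => (hx0 t ht.1).1.1.1.sub ((hx0 t ht.1).1.1.2.ofReal_comp.const_mul c)
    have dB : ∀ t ∈ Set.Icc x0 x, HasDerivAt (fun x => B + ε/2 * (E x - E x0)) (ε/2 * E' t) t :=
      fun t ht => (((hx0 t ht.1).1.1.2.sub_const _).const_mul _).const_add _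
    refine image_norm_le_of_norm_deriv_right_le_deriv_boundary'
      (f := fun x => u x - c * (E x : ℂ)) (B := fun x => B + ε/2 * (E x - E x0))
      (fun t ht => (dv t ht).continuousAt.continuousWithinAt)
      (fun t ht => (dv t ⟨ht.1, ht.2.le⟩).hasDerivWithinAt) (by simp [hB])
      (fun t ht => (dB t ht).continuousAt.continuousWithinAt)
      (fun t ht => (dB t ⟨ht.1, ht.2.le⟩).hasDerivWithinAt) ?_ ⟨hx, le_rfl⟩
    intro t ht
    have h1 := hx0 t ht.1
    have hp := h1.1.2
    have h2 := h1.2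
    rw [dist_eq_norm] at h2
    have hne : (E' t : ℂ) ≠ 0 := by exact_mod_cast hp.ne'
    have h3 : u' t - c * (E' t : ℂ) = (u' t / (E' t : ℂ) - c) * (E' t : ℂ) := by field_simp
    rw [h3, norm_mul, Complex.norm_real, Real.norm_of_nonneg hp.le]
    gcongr
  have hbig := hEt.eventually_gt_atTop (max 0 (2 * (B + ε/2 * |E x0|) / ε))
  obtain ⟨x1, hx1⟩ := eventually_atTop.1 hbig
  refine ⟨max x0 x1, fun x hx => ?_⟩
  have ha := est x ((le_max_left _ _).trans hx.le)
  have hb := hx1 x ((le_max_right _ _).trans hx.le)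
  have hpos : 0 < E x := lt_of_le_of_lt (le_max_left _ _) hb
  have hb2 := lt_of_le_of_lt (le_max_right _ _) hb
  rw [div_lt_iff₀ hε] at hb2
  have hne : (E x : ℂ) ≠ 0 := by exact_mod_cast hpos.ne'
  rw [dist_eq_norm]
  have h3 : u x / (E x : ℂ) - c = (u x - c * E x) / (E x : ℂ) := by field_simp
  rw [h3, norm_div, Complex.norm_real, Real.norm_of_nonneg hpos.le, div_lt_iff₀ hpos]
  have := neg_abs_le (E x0)
  nlinarith

lemma phi_limit {lam : ℂ} {y y' φ φ' : ℝ → ℂ} (hy : Sol lam y y') (hs : Sol lam φ φ')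
    (hw : Tendsto (fun x => y x * (wt x : ℂ)) atTop (𝓝 1)) (h0 : φ 0 = 0) (h0' : φ' 0 = 1) :
    Tendsto (fun x => φ x * ((wt x / Real.exp (4/5 * x ^ (5/2:ℝ)) : ℝ) : ℂ)) atTop (𝓝 (y 0 / 2)) := by
  have hne := ne_of_wt hw
  have hW : y 0 * φ' 0 - y' 0 * φ 0 = y 0 := by rw [h0, h0']; ring
  have key := lhopital (u := fun x => φ x / y x) (u' := fun x => y 0 / y x ^ 2)
    (E := fun x => Real.exp (4/5 * x ^ (5/2:ℝ)))
    (E' := fun x => 2 * x ^ (3/2:ℝ) * Real.exp (4/5 * x ^ (5/2:ℝ))) (c := y 0 / 2) ?_ ?_ ?_ ?_ ?_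
  · have h2 := key.mul hw
    rw [mul_one] at h2
    refine h2.congr' ?_
    filter_upwards [hne] with x hx
    push_cast
    field_simp
  · filter_upwards [hne] with x hx
    have := quot_deriv hy hs hx
    rwa [hW] at this
  · filter_upwards [eventually_gt_atTop 0] with x hx
    have := (((Real.hasDerivAt_rpow_const (x := x) (p := 5/2) (Or.inl hx.ne')).const_mul (4/5)).exp)
    refine this.congr_deriv ?_
    rw [show (5/2 - 1 : ℝ) = 3/2 by norm_num]
    ring
  · filter_upwards [eventually_gt_atTop 0] with x hx
    positivity
  · exact Real.tendsto_exp_atTop.comp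
      ((tendsto_rpow_atTop (by norm_num)).const_mul_atTop (by norm_num))
  · have h2 : Tendsto (fun x => y 0 / 2 / (y x * (wt x : ℂ)) ^ 2) atTop (𝓝 (y 0 / 2 / 1 ^ 2)) :=
      tendsto_const_nhds.div (hw.pow 2) (by norm_num)
    rw [one_pow, div_one] at h2
    refine h2.congr' ?_
    filter_upwards [hne, eventually_gt_atTop 0] with x hx hx0
    have e : (wt x) ^ 2 = x ^ (3/2:ℝ) * Real.exp (4/5 * x ^ (5/2:ℝ)) := by
      rw [wt, mul_pow, ← Real.rpow_mul_natCast hx0.le, ← Real.exp_nat_mul]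
      congr 1
      · norm_num
      · congr 1; push_cast; ring
    rw [mul_pow, ← Complex.ofReal_pow, e]
    push_cast
    rw [div_div, div_div]
    congr 1
    ring

lemma nonvanish {lam : ℂ} {y y' : ℝ → ℂ} (hy : Sol lam y y')
    (hw : Tendsto (fun x => y x * (wt x : ℂ)) atTop (𝓝 1)) (hl : lam.im ≠ 0 ∨ 0 ≤ lam.re) :
    y 0 ≠ 0 := by
  intro h0
  have dre : ∀ x, HasDerivAt (fun x => (y x).re) (y' x).re x := fun x =>
    Complex.reCLM.hasFDerivAt.comp_hasDerivAt x (hy x).1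
  have dim : ∀ x, HasDerivAt (fun x => (y x).im) (y' x).im x := fun x =>
    Complex.imCLM.hasFDerivAt.comp_hasDerivAt x (hy x).1
  have e : ∀ x : ℝ, ((x:ℂ) ^ 3 + lam) = ((x ^ 3 + lam.re : ℝ) : ℂ) + (lam.im : ℂ) * I := by
    intro x; conv_lhs => rw [← Complex.re_add_im lam]
    push_cast; ring
  have dre' : ∀ x : ℝ, HasDerivAt (fun x => (y' x).re)
      ((x ^ 3 + lam.re) * (y x).re - lam.im * (y x).im) x := fun x => by
    have := Complex.reCLM.hasFDerivAt.comp_hasDerivAt x (hy x).2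
    refine HasDerivAt.congr_deriv this ?_
    rw [e]; simp [← Complex.ofReal_pow]
  have dim' : ∀ x : ℝ, HasDerivAt (fun x => (y' x).im)
      ((x ^ 3 + lam.re) * (y x).im + lam.im * (y x).re) x := fun x => by
    have := Complex.imCLM.hasFDerivAt.comp_hasDerivAt x (hy x).2
    refine HasDerivAt.congr_deriv this ?_
    rw [e]; simp [← Complex.ofReal_pow]
  by_cases him : lam.im = 0
  · have hre : 0 ≤ lam.re := by tauto
    -- convexity of |y|^2
    have dK : ∀ x : ℝ, HasDerivAt (fun x => (y' x).re * (y x).re + (y' x).im * (y x).im)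
        ((y' x).re ^ 2 + (y' x).im ^ 2 + (x ^ 3 + lam.re) * ((y x).re ^ 2 + (y x).im ^ 2)) x := fun x => by
      refine (((dre' x).mul (dre x)).add ((dim' x).mul (dim x))).congr_deriv ?_
      rw [him]; ring
    have dS : ∀ x : ℝ, HasDerivAt (fun x => (y x).re ^ 2 + (y x).im ^ 2)
        (2 * ((y' x).re * (y x).re + (y' x).im * (y x).im)) x := fun x => by
      refine (((dre x).pow 2).add ((dim x).pow 2)).congr_deriv ?_
      simp; ring
    have mK : MonotoneOn (fun x => (y' x).re * (y x).re + (y' x).im * (y x).im) (Set.Ici 0) := by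
      apply monotoneOn_of_deriv_nonneg (convex_Ici 0)
      · exact fun x _ => (dK x).continuousAt.continuousWithinAt
      · exact fun x _ => (dK x).differentiableAt.differentiableWithinAt
      · intro x hx
        rw [interior_Ici] at hx
        have : (0:ℝ) < x := hx
        rw [(dK x).deriv]; positivity
    have K0 : ∀ x : ℝ, 0 ≤ x → 0 ≤ (y' x).re * (y x).re + (y' x).im * (y x).im := fun x hx => by
      have := mK (Set.mem_Ici.2 le_rfl) (Set.mem_Ici.2 hx) hx
      simpa [h0] using this
    have mS : MonotoneOn (fun x => (y x).re ^ 2 + (y x).im ^ 2) (Set.Ici 0) := by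
      apply monotoneOn_of_deriv_nonneg (convex_Ici 0)
      · exact fun x _ => (dS x).continuousAt.continuousWithinAt
      · exact fun x _ => (dS x).differentiableAt.differentiableWithinAt
      · intro x hx
        rw [interior_Ici] at hx
        rw [(dS x).deriv]; have := K0 x (le_of_lt hx); positivity
    have lS : Tendsto (fun x => (y x).re ^ 2 + (y x).im ^ 2) atTop (𝓝 0) := by
      have h1 := (Complex.continuous_re.tendsto 0).comp (small_of_wt hw)
      have h2 := (Complex.continuous_im.tendsto 0).comp (small_of_wt hw)
      simpa using (h1.pow 2).add (h2.pow 2)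
    obtain ⟨x, hx, hx0⟩ := ((ne_of_wt hw).and (eventually_ge_atTop 0)).exists
    have : (y x).re ^ 2 + (y x).im ^ 2 ≤ 0 := by
      refine ge_of_tendsto lS ?_
      filter_upwards [eventually_ge_atTop x] with t ht
      exact mS (Set.mem_Ici.2 hx0) (Set.mem_Ici.2 (hx0.trans ht)) ht
    apply hx
    apply Complex.ext
    · simp; nlinarith
    · simp; nlinarith
  · -- rotation of the phase
    set J : ℝ → ℝ := fun x => ((y' x).im * (y x).re - (y' x).re * (y x).im) / lam.im with hJ
    have dJ : ∀ x : ℝ, HasDerivAt J ((y x).re ^ 2 + (y x).im ^ 2) x := fun x => by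
      refine ((((dim' x).mul (dre x)).sub ((dre' x).mul (dim x))).div_const lam.im).congr_deriv ?_
      field_simp; ring
    have mJ : Monotone J := monotone_of_deriv_nonneg (fun x => (dJ x).differentiableAt)
      (fun x => by rw [(dJ x).deriv]; positivity)
    have J0 : J 0 = 0 := by simp [hJ, h0]
    obtain ⟨x0, hx0⟩ := eventually_atTop.1 ((ne_of_wt hw).and (eventually_ge_atTop 0))
    have Jpos : 0 < J (x0 + 1) := by
      have hs : StrictMonoOn J (Set.Ici x0) := by
        apply strictMonoOn_of_deriv_pos (convex_Ici x0)
        · exact fun x _ => (dJ x).continuousAt.continuousWithinAt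
        · intro x hx
          rw [interior_Ici] at hx
          rw [(dJ x).deriv]
          have := (Complex.normSq_pos.2 (hx0 x (le_of_lt hx)).1)
          rw [Complex.normSq_apply] at this
          nlinarith
      have h1 := hs (Set.mem_Ici.2 le_rfl) (Set.mem_Ici.2 (by linarith : x0 ≤ x0 + 1)) (by linarith)
      have h2 := mJ (hx0 x0 le_rfl).2
      linarith
    -- T = im / re
    have hwre := (Complex.continuous_re.tendsto 1).comp hw
    have hwim := (Complex.continuous_im.tendsto 1).comp hw
    simp only [Function.comp_def, Complex.re_mul_ofReal, Complex.im_mul_ofReal, Complex.one_re,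
      Complex.one_im] at hwre hwim
    have hrene : ∀ᶠ x in atTop, (y x).re ≠ 0 := by
      filter_upwards [hwre.eventually_ne one_ne_zero] with x hx h
      simp [h] at hx
    have hT : Tendsto (fun x => (y x).im / (y x).re / lam.im) atTop (𝓝 0) := by
      have := (hwim.div hwre one_ne_zero).div_const lam.im
      simp only [zero_div] at this
      refine this.congr' ?_
      filter_upwards [hrene, wt_atTop.eventually_gt_atTop 0] with x hx hx2
      simp only [Pi.div_apply]
      rw [mul_div_mul_right _ _ hx2.ne']
    have hsm : ∀ᶠ x in atTop, (y x).re ^ 2 < J (x0 + 1) := by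
      have h1 := ((Complex.continuous_re.tendsto 0).comp (small_of_wt hw)).pow 2
      simp only [Function.comp_def, Complex.zero_re] at h1
      exact h1.eventually (gt_mem_nhds (by simpa using Jpos))
    obtain ⟨x1, hx1⟩ := eventually_atTop.1 ((hrene.and hsm).and (eventually_ge_atTop (x0 + 1)))
    have dT : ∀ x ≥ x1, HasDerivAt (fun x => (y x).im / (y x).re / lam.im) (J x / (y x).re ^ 2) x := by
      intro x hx
      have hne := (hx1 x hx).1.1
      refine (((dim x).div (dre x) hne).div_const lam.im).congr_deriv ?_
      rw [hJ]; field_simp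
    have grow : ∀ x ≥ x1, x - x1 ≤ (y x).im / (y x).re / lam.im - (y x1).im / (y x1).re / lam.im := by
      intro x hx
      have := (convex_Ici x1).mul_sub_le_image_sub_of_le_deriv
        (f := fun x => (y x).im / (y x).re / lam.im) (C := 1)
        (fun t ht => (dT t ht).continuousAt.continuousWithinAt)
        (fun t ht => (dT t (interior_subset ht)).differentiableAt.differentiableWithinAt)
        (fun t ht => by
          have ht' : x1 ≤ t := interior_subset ht
          rw [(dT t ht').deriv, one_le_div (by have := (hx1 t ht').1.1; positivity)]
          exact (hx1 t ht').1.2.le.trans (mJ (hx1 t ht').2))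
        x1 (Set.mem_Ici.2 le_rfl) x hx hx
      linarith
    have : Tendsto (fun x => (y x).im / (y x).re / lam.im) atTop atTop := by
      refine tendsto_atTop_mono' atTop ?_ (tendsto_atTop_add_const_right atTop
        ((y x1).im / (y x1).re / lam.im - x1) tendsto_id)
      filter_upwards [eventually_ge_atTop x1] with x hx
      have := grow x hx
      simp only [id]; linarith
    exact not_tendsto_nhds_of_tendsto_atTop this 0 hT

lemma std_sol {f : ℂ → ℂ → ℂ} (hf : IsStdSolutionFamily f) (lam : ℂ) :
    Sol lam (fun x : ℝ => f x lam) (fun x : ℝ => deriv (fun w => f w lam) x) := by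
  intro x
  obtain ⟨hd, ho⟩ := hf.1 lam
  refine ⟨(hd x).hasDerivAt.comp_ofReal, ?_⟩
  have hd2 : Differentiable ℂ (deriv (fun w => f w lam)) := by
    exact differentiableOn_univ.1 (hd.differentiableOn.deriv isOpen_univ)
  have := (hd2 x).hasDerivAt.comp_ofReal
  rwa [ho x] at this

lemma std_sol_rot {f : ℂ → ℂ → ℂ} (hf : IsStdSolutionFamily f) (lam ω : ℂ) (hω : ω ^ 5 = 1) :
    Sol lam (fun x : ℝ => f (ω * x) (ω ^ 3 * lam))
      (fun x : ℝ => ω * deriv (fun w => f w (ω ^ 3 * lam)) (ω * x)) := by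
  intro x
  obtain ⟨hd, ho⟩ := hf.1 (ω ^ 3 * lam)
  have hd2 : Differentiable ℂ (deriv (fun w => f w (ω ^ 3 * lam))) := by
    exact differentiableOn_univ.1 (hd.differentiableOn.deriv isOpen_univ)
  have hm : HasDerivAt (fun z : ℂ => ω * z) ω (x:ℂ) := by
    simpa using (hasDerivAt_id (x:ℂ)).const_mul ω
  constructor
  · have := ((hd (ω * x)).hasDerivAt.comp (x:ℂ) hm).comp_ofReal
    refine HasDerivAt.congr_deriv this ?_
    ring
  · have := (((hd2 (ω * x)).hasDerivAt.comp (x:ℂ) hm).const_mul ω).comp_ofReal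
    refine HasDerivAt.congr_deriv this ?_
    rw [ho]
    linear_combination (x:ℂ) ^ 3 * f (ω * x) (ω ^ 3 * lam) * hω + lam * f (ω * x) (ω ^ 3 * lam) * hω

lemma std_tendsto {f : ℂ → ℂ → ℂ} (hf : IsStdSolutionFamily f) (lam ω : ℂ) (hω : ‖ω‖ = 1)
    (harg : |Complex.arg ω| ≤ 2 * Real.pi / 5) :
    Tendsto (fun x : ℝ => f (ω * x) lam * (ω * x : ℂ) ^ ((3 : ℂ) / 4) *
          Complex.exp ((2 / 5 : ℂ) * (ω * x : ℂ) ^ ((5 : ℂ) / 2))) atTop (𝓝 1) := by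
  obtain ⟨C, hC, R, hR, H⟩ := hf.2 (Real.pi / 5) (by positivity) {lam} isCompact_singleton
  rw [tendsto_iff_norm_sub_tendsto_zero]
  have h1 : Tendsto (fun x : ℝ => C * x ^ (-(1/2) : ℝ)) atTop (𝓝 0) := by
    simpa using (tendsto_rpow_neg_atTop (y := 1/2) (by norm_num)).const_mul C
  refine squeeze_zero' (Eventually.of_forall fun _ => norm_nonneg _) ?_ h1
  filter_upwards [eventually_ge_atTop R] with x hx
  have hx0 : 0 < x := lt_of_lt_of_le hR hx
  have hn : ‖ω * (x:ℂ)‖ = x := by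
    rw [norm_mul, hω, Complex.norm_real, Real.norm_of_nonneg hx0.le, one_mul]
  have := H lam rfl (ω * x) (by rw [hn]; exact hx) (by
    rw [mul_comm, Complex.arg_real_mul _ hx0]; linarith)
  rwa [hn] at this

lemma std_wt {f : ℂ → ℂ → ℂ} (hf : IsStdSolutionFamily f) (lam : ℂ) :
    Tendsto (fun x : ℝ => f x lam * (wt x : ℂ)) atTop (𝓝 1) := by
  have := std_tendsto hf lam 1 (by simp) (by simp; positivity)
  refine this.congr' ?_
  filter_upwards [eventually_gt_atTop 0] with x hx
  have e1 : (x:ℂ) ^ ((3:ℂ)/4) = ((x ^ (3/4:ℝ) : ℝ) : ℂ) := by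
    rw [Complex.ofReal_cpow hx.le]; norm_num
  have e2 : (x:ℂ) ^ ((5:ℂ)/2) = ((x ^ (5/2:ℝ) : ℝ) : ℂ) := by
    rw [Complex.ofReal_cpow hx.le]; norm_num
  rw [one_mul, e1, e2, wt]
  push_cast
  ring

lemma std_rot_big {f : ℂ → ℂ → ℂ} (hf : IsStdSolutionFamily f) (lam : ℂ) :
    ¬ Tendsto (fun x : ℝ => f (Complex.exp ((2 * Real.pi / 5 : ℝ) * I) * x) lam) atTop (𝓝 0) := by
  intro hcon
  set ω := Complex.exp ((2 * Real.pi / 5 : ℝ) * I) with hω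
  have hpi := Real.pi_pos
  have harg : Complex.arg ω = 2 * Real.pi / 5 := by
    rw [hω, Complex.arg_exp_mul_I, toIocMod_eq_self]
    constructor <;> linarith
  have h1 := std_tendsto hf lam ω (by rw [hω, Complex.norm_exp_ofReal_mul_I])
    (by rw [harg, abs_of_pos (by positivity)])
  have hlim : Tendsto (fun x : ℝ => x ^ (3/4:ℝ) * Real.exp (-(2/5) * x ^ (5/2:ℝ))) atTop (𝓝 0) := by
    have := (tendsto_rpow_mul_exp_neg_mul_atTop_nhds_zero (3/10) (2/5) (by norm_num)).comp
      (tendsto_rpow_atTop (y := 5/2) (by norm_num))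
    refine this.congr' ?_
    filter_upwards [eventually_gt_atTop 0] with x hx
    simp only [Function.comp_def]
    rw [← Real.rpow_mul hx.le]
    norm_num
  have h2 := (hcon.norm.mul hlim)
  rw [norm_zero, zero_mul] at h2
  have h3 := h1.norm
  rw [norm_one] at h3
  refine zero_ne_one (tendsto_nhds_unique (h2.congr' ?_) h3)
  filter_upwards [eventually_gt_atTop 0] with x hx
  have hxc : (x:ℂ) ≠ 0 := by exact_mod_cast hx.ne'
  have hpow : ∀ s : ℝ, (ω * x : ℂ) ^ (s:ℂ) =
      ((x ^ s : ℝ) : ℂ) * Complex.exp ((s * (2 * Real.pi / 5) : ℝ) * I) := by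
    intro s
    have hne : (ω * x : ℂ) ≠ 0 := mul_ne_zero (Complex.exp_ne_zero _) hxc
    have hlog : Complex.log (ω * x) = (Real.log x : ℂ) + (2 * Real.pi / 5 : ℝ) * I := by
      rw [mul_comm, Complex.log_ofReal_mul hx (Complex.exp_ne_zero _), Complex.log_exp]
      · simp only [Complex.mul_im, Complex.ofReal_re, Complex.ofReal_im, Complex.I_im, Complex.I_re]
        linarith
      · simp only [Complex.mul_im, Complex.ofReal_re, Complex.ofReal_im, Complex.I_im, Complex.I_re]
        linarith
    rw [Complex.cpow_def_of_ne_zero hne, hlog, Real.rpow_def_of_pos hx, Complex.ofReal_exp,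
      ← Complex.exp_add]
    congr 1; push_cast; ring
  have e1 := hpow (3/4)
  have e2 := hpow (5/2)
  have e3 : ((5/2 * (2 * Real.pi / 5) : ℝ) : ℂ) * I = Real.pi * I := by push_cast; ring
  rw [e3, Complex.exp_pi_mul_I] at e2
  have c1 : ((3/4 : ℝ) : ℂ) = 3/4 := by push_cast; ring
  have c2 : ((5/2 : ℝ) : ℂ) = 5/2 := by push_cast; ring
  rw [c1] at e1
  rw [c2] at e2
  have e4 : (2/5 : ℂ) * (((x ^ (5/2:ℝ) : ℝ) : ℂ) * -1) = ((-(2/5) * x ^ (5/2:ℝ) : ℝ) : ℂ) := by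
    push_cast; ring
  rw [e1, e2, e4, norm_mul, norm_mul, norm_mul, Complex.norm_exp_ofReal_mul_I, ← Complex.ofReal_exp,
    Complex.norm_real, Complex.norm_real, Real.norm_of_nonneg (by positivity),
    Real.norm_of_nonneg (by positivity)]
  ring

theorem h_lt_one (f : ℂ → ℂ → ℂ) (hf : IsStdSolutionFamily f)
    (α : ℂ) (hα : α = Complex.exp (Real.pi * Complex.I / 10)) :
    ∀ lam : ℂ, 0 < lam.im →
      f 0 (-α ^ 2 * lam) ≠ 0 ∧
      ‖f 0 (-(α ^ 2)⁻¹ * lam)‖ < ‖f 0 (-α ^ 2 * lam)‖ := by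
  intro lam hlam
  have hpi := Real.pi_pos
  have sinpos : 0 < Real.sin (Real.pi / 5) := Real.sin_pos_of_pos_of_lt_pi (by positivity) (by linarith)
  have a2 : α ^ 2 = (Real.cos (Real.pi / 5) : ℂ) + (Real.sin (Real.pi / 5) : ℂ) * I := by
    rw [hα, ← Complex.exp_nat_mul, Complex.ofReal_cos, Complex.ofReal_sin, ← Complex.exp_mul_I]
    congr 1; push_cast; ring
  have a2i : (α ^ 2)⁻¹ = (Real.cos (Real.pi / 5) : ℂ) - (Real.sin (Real.pi / 5) : ℂ) * I := by
    apply inv_eq_of_mul_eq_one_right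
    rw [a2]
    have := Real.cos_sq_add_sin_sq (Real.pi / 5)
    have h2 : ((Real.cos (Real.pi / 5) : ℂ)) ^ 2 + (Real.sin (Real.pi / 5) : ℂ) ^ 2 = 1 := by
      exact_mod_cast this
    linear_combination h2 - (Real.sin (Real.pi / 5) : ℂ) ^ 2 * Complex.I_sq
  have na : ‖α ^ 2‖ = 1 := by
    rw [hα, ← Complex.exp_nat_mul, show ((2:ℕ):ℂ) * (Real.pi * I / 10) = ((Real.pi / 5 : ℝ) : ℂ) * I by
      push_cast; ring, Complex.norm_exp_ofReal_mul_I]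
  set c := Real.cos (Real.pi / 5)
  set s := Real.sin (Real.pi / 5)
  set μ := -(α ^ 2)⁻¹ * lam with hμ
  set ν := -α ^ 2 * lam with hν
  have nμ : ‖μ‖ = ‖lam‖ := by rw [hμ, norm_mul, norm_neg, norm_inv, na]; simp
  have nν : ‖ν‖ = ‖lam‖ := by rw [hν, norm_mul, norm_neg, na]; simp
  set r := ‖lam‖ with hr
  have hr0 : 0 < r := by
    rw [hr, norm_pos_iff]; rintro rfl; simp at hlam
  have reμ : μ.re = -(c * lam.re + s * lam.im) := by rw [hμ, a2i]; simp; ring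
  have reν : ν.re = -(c * lam.re - s * lam.im) := by rw [hν, a2]; simp; ring
  have imν : ν.im = -(c * lam.im + s * lam.re) := by rw [hν, a2]; simp; ring
  have hΔ : 0 < ν.re - μ.re := by
    rw [reμ, reν]; have := mul_pos sinpos hlam; linarith
  have hsl : ν.im ≠ 0 ∨ 0 ≤ ν.re := by
    by_contra hcon
    push Not at hcon
    obtain ⟨h1, h2⟩ := hcon
    have cs : c ^ 2 + s ^ 2 = 1 := Real.cos_sq_add_sin_sq (Real.pi / 5)
    have : lam.im = s * ν.re - c * ν.im := by
      rw [reν, imν]; linear_combination (-lam.im) * cs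
    rw [h1] at this
    nlinarith
  have hD : ∀ l : ℂ, (l.im ≠ 0 ∨ 0 ≤ l.re) → f 0 l ≠ 0 := by
    intro l hl
    simpa using nonvanish (std_sol hf l) (std_wt hf l) hl
  have hDν := hD ν hsl
  refine ⟨hDν, ?_⟩
  by_cases hDμ : f 0 μ = 0
  · rw [hDμ, norm_zero]; exact norm_pos_iff.2 hDν
  have hω5 : Complex.exp ((2 * Real.pi / 5 : ℝ) * I) ^ 5 = 1 := by
    rw [← Complex.exp_nat_mul, ← Complex.exp_two_pi_mul_I]
    congr 1; push_cast; ring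
  have hex : ∀ l : ℂ, ∃ φ φ' : ℝ → ℂ, Sol l φ φ' ∧ φ 0 = 0 ∧ φ' 0 = 1 := fun l =>
    exists_phi (std_sol hf l) (std_sol_rot hf l _ hω5) (std_wt hf l) (std_rot_big hf _)
  choose φ φ' hs h0 h0' using hex
  have T : ∀ l : ℂ, Tendsto (fun x => ‖φ l x‖ * (wt x / Real.exp (4/5 * x ^ (5/2:ℝ)))) atTop
      (𝓝 (‖f 0 l‖ / 2)) := by
    intro l
    have := (phi_limit (std_sol hf l) (hs l) (std_wt hf l) (h0 l) (h0' l)).norm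
    simp only [Complex.ofReal_zero, norm_div, Complex.norm_two] at this
    refine this.congr' ?_
    filter_upwards [wt_atTop.eventually_gt_atTop 0] with x hx
    rw [norm_mul, Complex.norm_real, Real.norm_of_nonneg (by positivity)]
  have main : (‖f 0 μ‖/2) ^ 2 * (r * (‖f 0 r‖/2) ^ 2 +
      2 * (ν.re - μ.re) * (‖f 0 0‖/2) * ((‖f 0 r‖/2) - (‖f 0 0‖/2))) ≤
      (‖f 0 ν‖/2) ^ 2 * (r * (‖f 0 r‖/2) ^ 2) := by
    refine le_of_tendsto_of_tendsto (((T μ).pow 2).mul ((((T r).pow 2).const_mul r).add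
      (((T 0).const_mul (2 * (ν.re - μ.re))).mul ((T r).sub (T 0)))))
      (((T ν).pow 2).mul (((T r).pow 2).const_mul r)) ?_
    filter_upwards [eventually_gt_atTop 0] with X hX
    have := phi_ineq hr0 nμ nν (by linarith) hs h0 h0' hX
    set g := wt X / Real.exp (4/5 * X ^ (5/2:ℝ))
    have h4 := mul_le_mul_of_nonneg_left this (by positivity : 0 ≤ g ^ 4)
    refine le_trans (le_of_eq ?_) (h4.trans (le_of_eq ?_)) <;> ring
  obtain ⟨k, hk, hkk⟩ := phi_ratio hr0 (hs r) (h0 r) (h0' r) (hs 0) (h0 0) (h0' 0)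
  have hkD : k * (‖f 0 0‖/2) ≤ ‖f 0 r‖/2 := by
    refine le_of_tendsto_of_tendsto ((T 0).const_mul k) (T r) ?_
    filter_upwards [eventually_ge_atTop 1, wt_atTop.eventually_gt_atTop 0] with X hX hw
    rw [← mul_assoc]
    exact mul_le_mul_of_nonneg_right (hkk X hX) (by positivity)
  have p0 : 0 < ‖f 0 0‖ := norm_pos_iff.2 (hD 0 (Or.inr (by simp)))
  have pr : 0 < ‖f 0 r‖ := norm_pos_iff.2 (hD r (Or.inr (by simpa using hr0.le)))
  have pμ : 0 < ‖f 0 μ‖ := norm_pos_iff.2 hDμ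
  have hgap : 0 < (‖f 0 r‖/2) - (‖f 0 0‖/2) := by nlinarith
  by_contra hcon
  push Not at hcon
  have hsq : (‖f 0 ν‖/2) ^ 2 ≤ (‖f 0 μ‖/2) ^ 2 := by gcongr
  have h1 := mul_le_mul_of_nonneg_right hsq (by positivity : 0 ≤ r * (‖f 0 r‖/2) ^ 2)
  have h2 : 0 < (‖f 0 μ‖/2) ^ 2 * (2 * (ν.re - μ.re) * (‖f 0 0‖/2) * ((‖f 0 r‖/2) - (‖f 0 0‖/2))) := by
    positivity
  nlinarith
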